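/- Let M : S → ℂ with M(1) = 1 and let L be its admissible cumulants. Then the cumulant generating function satisfies L{z,w} = L{z,0} + (M_⋆{z,w} − M{z,0}) ⋆ M_⋆^{−1}{z,w} in A(S), where M_⋆{z,w} = (M{z,w})_{⋆ M^{−1}{z,0}}, M^{−1}{z,0} is the convolution inverse of M{z,0} (supported on S(z)), and M_⋆^{−1}{z,w} is the convolution inverse of M_⋆{z,w} in A(S). -/

import Mathlib

/-- The two-letter alphabet `{z, w}`. -/
inductive Letter | z | w
deriving DecidableEq

/-- Words: elements of the free monoid `S = FS({z,w})`. -/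
abbrev Word := List Letter

/-- The convolution product of the semigroup algebra `A(S)`:
`(f ⋆ g)(s) = Σ_{uv = s} f(u) g(v)`. -/
noncomputable def conv (f g : Word → ℂ) (s : Word) : ℂ :=
  ∑ i ∈ Finset.range (s.length + 1), f (s.take i) * g (s.drop i)

/-- `G` is the prefix-accumulating form of the composition `f_{⋆g}` of Definition 6.2:
`G(pre, s) = f(pre ++ s)` if `s` has no `w`, and if `s = z^a w^k rest` with `k ≥ 1`
maximal, the leading `z`-run of `s` is split in all possible ways, each removed part
`z^{a-c}` contributing a factor `g(z^{a-c})`.  Then `f_{⋆g}(s) = G([], s)`. -/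
def IsStarAux (f g : Word → ℂ) (G : Word → Word → ℂ) : Prop :=
  (∀ pre s : Word, Letter.w ∉ s → G pre s = f (pre ++ s)) ∧
    ∀ (pre : Word) (a k : ℕ) (rest : Word), 1 ≤ k → rest.head? ≠ some Letter.w →
      G pre (List.replicate a Letter.z ++ List.replicate k Letter.w ++ rest) =
        ∑ c ∈ Finset.range (a + 1),
          g (List.replicate (a - c) Letter.z) *
            G (pre ++ List.replicate c Letter.z ++ List.replicate k Letter.w) rest

/-- `n(s)! = n₁!n₂!⋯n_p!` for `s = z^{n₁} w^{k₁} z^{n₂} ⋯ w^{k_{p−1}} z^{n_p}`: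
the product of the factorials of the lengths of the maximal `z`-runs of `s`. -/
def nFact (s : Word) : ℕ :=
  ((s.splitOn Letter.w).map fun r => r.length.factorial).prod

/-- `s` is a partition of the index set of a word into blocks; see `IsCumulants`. -/
def letterAt (s : Word) (j : ℕ) : Letter := s.getD j Letter.z

/-- `P` is a partition of the finite set of positions `g ⊆ ℕ` into nonempty blocks. -/
def IsPartitionOn (g : Finset ℕ) (P : Finset (Finset ℕ)) : Prop :=
  (∀ b ∈ P, b.Nonempty) ∧ (P : Set (Finset ℕ)).PairwiseDisjoint id ∧ P.sup id = g

/-- The position `j` is inner with respect to the block `b`. -/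
def InnerPos (j : ℕ) (b : Finset ℕ) : Prop :=
  j ∉ b ∧ ∃ i ∈ b, ∃ k ∈ b, i < j ∧ j < k

/-- A partition is admissible if no block contains a letter `w` that is inner
with respect to another block. -/
def Admissible (s : Word) (P : Finset (Finset ℕ)) : Prop :=
  ∀ b ∈ P, ∀ b' ∈ P, b ≠ b' → ∀ j ∈ b, letterAt s j = Letter.w → ¬ InnerPos j b'

open scoped Classical in
/-- The set `AP(s)` of admissible partitions of the positions `g` of the word `s`. -/
noncomputable def APfin (s : Word) (g : Finset ℕ) : Finset (Finset (Finset ℕ)) :=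
  g.powerset.powerset.filter fun P => IsPartitionOn g P ∧ Admissible s P

/-- The subword of `s` determined by a set of positions `b`. -/
def wordOf (s : Word) (b : Finset ℕ) : Word :=
  (b.sort (· ≤ ·)).map (letterAt s)

/-- `L` is the family of admissible cumulants of the moment function `M`. -/
def IsCumulants (M L : Word → ℂ) : Prop :=
  ∀ s : Word, s ≠ [] →
    M s = ∑ P ∈ APfin s (Finset.range s.length), ∏ b ∈ P, L (wordOf s b)

/-- The moment generating function `M{z,w}(s) = M(s)/n(s)!`. -/
noncomputable def genFun (M : Word → ℂ) (s : Word) : ℂ := M s / (nFact s : ℂ)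

open scoped Classical in
/-- The restriction `f{z,0}` of `f` to `S(z)`, extended by `0`. -/
noncomputable def restrZ (f : Word → ℂ) (s : Word) : ℂ :=
  if Letter.w ∈ s then 0 else f s

open scoped Classical in
/-- `δf = f − f{z,0}`. -/
noncomputable def deltaF (f : Word → ℂ) (s : Word) : ℂ :=
  if Letter.w ∈ s then f s else 0

/-!
The block `b` of the first letter `w` of a word contains every `w` up to the end of `b`. Read the
word from left to right: between two consecutive `w`s of `b` the letters `z` left out are
partitioned among themselves and contribute a factor `M(z^j)`, whereas all letters left out to
the right of the last `w` of `b` contribute a single moment. Choosing the letters `z` of `b`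
inside a run yields binomial coefficients, which `n(s)!` absorbs. Composing with `M⁻¹{z,0}`
cancels the factors `M(z^j)`, and what remains is `M⋆{z,w} − M{z,0} = (L{z,w} − L{z,0}) ⋆ M⋆{z,w}`.
-/

section PartitionSum

variable {R : Type*} [CommSemiring R]

open scoped Classical in
/-- The sum of the products `∏ b ∈ P, φ b` over all partitions `P` of `g`. -/
noncomputable def partitionSum (φ : Finset ℕ → R) (g : Finset ℕ) : R :=
  ∑ P ∈ g.powerset.powerset with IsPartitionOn g P, ∏ b ∈ P, φ b

lemma IsPartitionOn.subset {g b : Finset ℕ} {P : Finset (Finset ℕ)} (hP : IsPartitionOn g P)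
    (hb : b ∈ P) : b ⊆ g :=
  hP.2.2 ▸ Finset.le_sup (f := id) hb

lemma IsPartitionOn.exists_mem {g : Finset ℕ} {P : Finset (Finset ℕ)} (hP : IsPartitionOn g P)
    {x : ℕ} (hx : x ∈ g) : ∃ b ∈ P, x ∈ b := by
  rw [← hP.2.2] at hx
  simpa using hx

lemma IsPartitionOn.mem_powerset {g : Finset ℕ} {P : Finset (Finset ℕ)}
    (hP : IsPartitionOn g P) : P ∈ g.powerset.powerset :=
  Finset.mem_powerset.2 fun _ hb => Finset.mem_powerset.2 (hP.subset hb)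

lemma isPartitionOn_empty_iff {P : Finset (Finset ℕ)} : IsPartitionOn ∅ P ↔ P = ∅ := by
  constructor
  · intro hP
    refine Finset.eq_empty_of_forall_notMem fun b hb => ?_
    exact (hP.1 b hb).ne_empty (Finset.subset_empty.1 (hP.subset hb))
  · rintro rfl
    simp [IsPartitionOn]

lemma isPartitionOn_insert_iff {g b : Finset ℕ} {P : Finset (Finset ℕ)} (hbP : b ∉ P) :
    IsPartitionOn g (insert b P) ↔ b.Nonempty ∧ b ⊆ g ∧ IsPartitionOn (g \ b) P := by
  constructor
  · intro hP
    have hdisj : Disjoint (P.sup id) b := by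
      refine Finset.disjoint_sup_left.2 fun c hc => ?_
      exact hP.2.1 (by simp [hc]) (by simp) (by rintro rfl; exact hbP hc)
    refine ⟨hP.1 b (by simp), hP.subset (by simp), fun c hc => hP.1 c (by simp [hc]),
      hP.2.1.subset (by simp), ?_⟩
    rw [← hP.2.2, Finset.sup_insert, id, Finset.sup_eq_union,
      Finset.union_sdiff_cancel_left hdisj.symm]
  · rintro ⟨hb, hbg, hP⟩
    refine ⟨?_, ?_, ?_⟩
    · simpa [hb] using hP.1
    · rw [Finset.coe_insert]
      exact hP.2.1.insert fun c hc _ =>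
        Finset.disjoint_sdiff.mono_right (hP.subset hc)
    · rw [Finset.sup_insert, hP.2.2, id, Finset.sup_eq_union, Finset.union_sdiff_of_subset hbg]

@[simp]
lemma partitionSum_empty (φ : Finset ℕ → R) : partitionSum φ ∅ = 1 := by
  simp [partitionSum, isPartitionOn_empty_iff, Finset.filter_eq']

lemma partitionSum_eq_sum_mem (φ : Finset ℕ → R) {g : Finset ℕ} {x : ℕ} (hx : x ∈ g) :
    partitionSum φ g = ∑ b ∈ g.powerset with x ∈ b, φ b * partitionSum φ (g \ b) := by
  classical
  have notMem {b : Finset ℕ} (hxb : x ∈ b) {P : Finset (Finset ℕ)}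
      (hP : IsPartitionOn (g \ b) P) {c : Finset ℕ} (hxc : x ∈ c) : c ∉ P := fun hc =>
    (Finset.mem_sdiff.1 (hP.subset hc hxc)).2 hxb
  simp_rw [partitionSum, Finset.mul_sum]
  rw [Finset.sum_sigma']
  symm
  refine Finset.sum_bij (fun y _ => insert y.1 y.2) ?_ ?_ ?_ ?_
  · rintro ⟨b, P⟩ hbP
    obtain ⟨⟨hbg, hxb⟩, -, hP⟩ := by simpa using hbP
    have : IsPartitionOn g (insert b P) :=
      (isPartitionOn_insert_iff (notMem hxb hP hxb)).2 ⟨⟨x, hxb⟩, hbg, hP⟩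
    exact Finset.mem_filter.2 ⟨this.mem_powerset, this⟩
  · rintro ⟨b, P⟩ hbP ⟨c, Q⟩ hcQ (heq : insert b P = insert c Q)
    obtain ⟨⟨-, hxb⟩, -, hP⟩ := by simpa using hbP
    obtain ⟨⟨-, hxc⟩, -, hQ⟩ := by simpa using hcQ
    obtain rfl : b = c := (Finset.mem_insert.1 (heq ▸ Finset.mem_insert_self b P)).resolve_right
      (notMem hxc hQ hxb)
    rw [← Finset.erase_insert (notMem hxb hP hxb), heq, Finset.erase_insert (notMem hxb hQ hxb)]
  · intro P hP
    have hP := (Finset.mem_filter.1 hP).2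
    obtain ⟨b, hb, hxb⟩ := hP.exists_mem hx
    rw [← Finset.insert_erase hb, isPartitionOn_insert_iff (Finset.notMem_erase b P)] at hP
    refine ⟨⟨b, P.erase b⟩, ?_, Finset.insert_erase hb⟩
    simpa [hP.2.1, hxb, hP.2.2] using hP.2.2.mem_powerset
  · rintro ⟨b, P⟩ hbP
    obtain ⟨⟨-, hxb⟩, -, hP⟩ := by simpa using hbP
    exact (Finset.prod_insert (notMem hxb hP hxb)).symm

lemma partitionSum_image {φ ψ : Finset ℕ → R} {e : ℕ → ℕ} {g : Finset ℕ} (he : Set.InjOn e g)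
    (hφ : ∀ b ⊆ g, φ (b.image e) = ψ b) : partitionSum φ (g.image e) = partitionSum ψ g := by
  induction g using Finset.strongInduction with
  | H g ih =>
    obtain rfl | ⟨x, hx⟩ := g.eq_empty_or_nonempty
    · simp
    rw [partitionSum_eq_sum_mem φ (Finset.mem_image_of_mem e hx), partitionSum_eq_sum_mem ψ hx,
      Finset.sum_filter, Finset.sum_filter, Finset.powerset_image,
      Finset.sum_image (Finset.image_injOn_powerset_of_injOn he)]
    refine Finset.sum_congr rfl fun b hb => ?_
    rw [Finset.mem_powerset] at hb
    have hmem : e x ∈ b.image e ↔ x ∈ b := by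
      rw [← Finset.mem_coe, Finset.coe_image]
      exact he.mem_image_iff (by exact_mod_cast hb) hx
    have hsdiff : g.image e \ b.image e = (g \ b).image e := by
      rw [← Finset.coe_inj]
      push_cast
      exact (he.image_sdiff_subset (by exact_mod_cast hb)).symm
    simp only [hmem]
    split_ifs with hxb
    · rw [hφ b hb, hsdiff, ih (g \ b) (Finset.sdiff_ssubset hb ⟨x, hxb⟩) (he.mono (by simp))
        fun c hc => hφ c (hc.trans Finset.sdiff_subset)]
    · rfl

lemma partitionSum_union {φ : Finset ℕ → R} {g h : Finset ℕ} (hgh : Disjoint g h)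
    (hφ : ∀ b ⊆ g ∪ h, φ b ≠ 0 → b ⊆ g ∨ b ⊆ h) :
    partitionSum φ (g ∪ h) = partitionSum φ g * partitionSum φ h := by
  induction g using Finset.strongInduction with
  | H g ih =>
    obtain rfl | ⟨x, hx⟩ := g.eq_empty_or_nonempty
    · simp
    rw [partitionSum_eq_sum_mem φ (Finset.mem_union_left h hx), partitionSum_eq_sum_mem φ hx,
      Finset.sum_mul]
    symm
    refine Finset.sum_subset_zero_on_sdiff ?_ ?_ ?_
    · exact Finset.filter_subset_filter _ (Finset.powerset_mono.2 Finset.subset_union_left)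
    · intro b hb
      simp only [Finset.mem_sdiff, Finset.mem_filter, Finset.mem_powerset, not_and] at hb
      obtain ⟨⟨hbgh, hxb⟩, hbg⟩ := hb
      suffices φ b = 0 by rw [this, zero_mul]
      by_contra hb0
      rcases hφ b hbgh hb0 with hb | hb
      · exact hbg hb hxb
      · exact Finset.disjoint_left.1 hgh hx (hb hxb)
    · intro b hb
      obtain ⟨hbg, hxb⟩ := by simpa using hb
      have hsub : g \ b ∪ h ⊆ g ∪ h := Finset.union_subset_union_left Finset.sdiff_subset
      have hsdiff : (g ∪ h) \ b = g \ b ∪ h := by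
        rw [Finset.union_sdiff_distrib, Finset.sdiff_eq_self_of_disjoint (hgh.mono_left hbg).symm]
      rw [hsdiff, mul_assoc, ih (g \ b) (Finset.sdiff_ssubset hbg ⟨x, hxb⟩)
        (hgh.mono_left Finset.sdiff_subset)]
      intro c hc hc0
      refine (hφ c (hc.trans hsub) hc0).imp_left fun hcg => ?_
      exact Finset.subset_sdiff.2 ⟨hcg, Finset.disjoint_left.2 fun y hyc hyb =>
        (Finset.mem_union.1 (hc hyc)).elim (fun hy => (Finset.mem_sdiff.1 hy).2 hyb)
          fun hy => Finset.disjoint_left.1 hgh (hbg hyb) hy⟩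

end PartitionSum

section Subword

lemma wordOf_toFinset (s : Word) {l : List ℕ} (hl : l.Pairwise (· < ·)) :
    wordOf s l.toFinset = l.map (letterAt s) := by
  rw [wordOf, (List.toFinset_sort (· ≤ ·) (hl.imp ne_of_lt)).2 (hl.imp le_of_lt)]

lemma wordOf_image (s : Word) {e : ℕ → ℕ} {b : Finset ℕ} (he : StrictMonoOn e b) :
    wordOf s (b.image e) = (b.sort (· ≤ ·)).map fun i => letterAt s (e i) := by
  have hsort : ((b.sort (· ≤ ·)).map e).Pairwise (· < ·) := by
    refine List.pairwise_map.2 ((Finset.sortedLT_sort b).pairwise.imp_of_mem ?_)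
    intro i j hi hj hij
    exact he (by simpa using hi) (by simpa using hj) hij
  have himage : b.image e = ((b.sort (· ≤ ·)).map e).toFinset := by
    ext
    simp
  rw [himage, wordOf_toFinset s hsort, List.map_map]
  rfl

lemma wordOf_union (s : Word) {g h : Finset ℕ} (hgh : ∀ i ∈ g, ∀ j ∈ h, i < j) :
    wordOf s (g ∪ h) = wordOf s g ++ wordOf s h := by
  have hsort : (g.sort (· ≤ ·) ++ h.sort (· ≤ ·)).Pairwise (· < ·) :=
    List.pairwise_append.2 ⟨(Finset.sortedLT_sort g).pairwise, (Finset.sortedLT_sort h).pairwise,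
      fun i hi j hj => hgh i (by simpa using hi) j (by simpa using hj)⟩
  have hunion : g ∪ h = (g.sort (· ≤ ·) ++ h.sort (· ≤ ·)).toFinset := by simp
  rw [hunion, wordOf_toFinset s hsort, List.map_append]
  rfl

lemma wordOf_insert (s : Word) {b : Finset ℕ} {p : ℕ} (hb : ∀ i ∈ b, i < p) :
    wordOf s (insert p b) = wordOf s b ++ [letterAt s p] := by
  rw [Finset.insert_eq, Finset.union_comm,
    wordOf_union s fun i hi j hj => Finset.mem_singleton.1 hj ▸ hb i hi]
  simp [wordOf]

@[simp]
lemma wordOf_empty (s : Word) : wordOf s ∅ = [] := by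
  simp [wordOf]

lemma wordOf_Ico_length (s : Word) (p : ℕ) : wordOf s (Finset.Ico p s.length) = s.drop p := by
  have hIco : Finset.Ico p s.length = (List.range' p (s.length - p)).toFinset := by
    ext i
    simp only [Finset.mem_Ico, List.mem_toFinset, List.mem_range'_1]
    omega
  rw [hIco, wordOf_toFinset s List.pairwise_lt_range']
  refine List.ext_getElem (by simp) fun i hi _ => ?_
  have : p + i < s.length := by
    simp only [List.length_map, List.length_range'] at hi
    omega
  simp [letterAt, this]

@[simp]
lemma length_wordOf (s : Word) (b : Finset ℕ) : (wordOf s b).length = b.card := by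
  simp [wordOf]

lemma mem_wordOf {s : Word} {b : Finset ℕ} {x : Letter} :
    x ∈ wordOf s b ↔ ∃ j ∈ b, letterAt s j = x := by
  simp [wordOf]

lemma lt_length_of_letterAt_eq_w {s : Word} {j : ℕ} (hj : letterAt s j = Letter.w) :
    j < s.length := by
  by_contra! hle
  rw [letterAt, List.getD_eq_default _ _ hle] at hj
  cases hj

lemma exists_letterAt_eq_w {s : Word} : Letter.w ∈ s ↔ ∃ j, letterAt s j = Letter.w := by
  constructor
  · intro hs
    obtain ⟨j, hj, hjw⟩ := List.mem_iff_getElem.1 hs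
    exact ⟨j, by simp [letterAt, hj, hjw]⟩
  · rintro ⟨j, hjw⟩
    have hj := lt_length_of_letterAt_eq_w hjw
    exact List.mem_iff_getElem.2 ⟨j, hj, by simpa [letterAt, hj] using hjw⟩

lemma exists_strictMonoOn_image_range (s : Word) (g : Finset ℕ) :
    ∃ e : ℕ → ℕ, StrictMonoOn e (Finset.range g.card) ∧ (Finset.range g.card).image e = g ∧
      ∀ i < g.card, letterAt (wordOf s g) i = letterAt s (e i) := by
  have hfin : {i | i ∈ g}.Finite := g.finite_toSet
  have hcard : hfin.toFinset = g := by simp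
  have hmono : StrictMonoOn (Nat.nth (· ∈ g)) (Finset.range g.card) := by
    simpa [hcard] using Nat.nth_strictMonoOn hfin
  have himage : (Finset.range g.card).image (Nat.nth (· ∈ g)) = g := by
    rw [← Finset.coe_inj]
    simpa [hcard] using Nat.image_nth_Iio_card hfin
  refine ⟨Nat.nth (· ∈ g), hmono, himage, fun i hi => ?_⟩
  conv_lhs => rw [← himage, wordOf_image s hmono, Finset.sort_range]
  simp [letterAt, hi]

end Subword

section AdmissibleBlock

/-- A block is admissible if no letter `w` of `s` is inner with respect to it; admissible
partitions are those all of whose blocks are admissible. -/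
def AdmissibleBlock (s : Word) (b : Finset ℕ) : Prop :=
  ∀ j, letterAt s j = Letter.w → ¬ InnerPos j b

open scoped Classical in
/-- The weight of a block: the value of `L` on its subword if the block is admissible, and `0`
otherwise, so that sums over admissible partitions become sums over all partitions. -/
noncomputable def blockWeight (L : Word → ℂ) (s : Word) (b : Finset ℕ) : ℂ :=
  if AdmissibleBlock s b then L (wordOf s b) else 0

lemma admissible_iff_forall_admissibleBlock {s : Word} {P : Finset (Finset ℕ)}
    (hP : IsPartitionOn (Finset.range s.length) P) :
    Admissible s P ↔ ∀ b ∈ P, AdmissibleBlock s b := by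
  constructor
  · intro h b hb j hjw hj
    obtain ⟨c, hc, hjc⟩ := hP.exists_mem (Finset.mem_range.2 (lt_length_of_letterAt_eq_w hjw))
    exact h c hc b hb (by rintro rfl; exact hj.1 hjc) j hjc hjw hj
  · intro h _ _ b hb _ j _ hjw
    exact h b hb j hjw

lemma IsCumulants.moment_eq_partitionSum {M L : Word → ℂ} (hL : IsCumulants M L) (hM : M [] = 1)
    (s : Word) : M s = partitionSum (blockWeight L s) (Finset.range s.length) := by
  classical
  obtain rfl | hs := eq_or_ne s []
  · simp [hM]
  rw [hL s hs, partitionSum, APfin, ← Finset.filter_filter, Finset.sum_filter]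
  refine Finset.sum_congr rfl fun P hP => ?_
  rw [Finset.mem_filter] at hP
  simp only [admissible_iff_forall_admissibleBlock hP.2, blockWeight]
  exact (Finset.prod_ite_zero).symm

lemma admissibleBlock_image_iff {s : Word} {g b : Finset ℕ} {e : ℕ → ℕ}
    (hg : AdmissibleBlock s g) (he : StrictMonoOn e (Finset.range g.card))
    (himage : (Finset.range g.card).image e = g)
    (hletter : ∀ i < g.card, letterAt (wordOf s g) i = letterAt s (e i))
    (hb : b ⊆ Finset.range g.card) :
    AdmissibleBlock s (b.image e) ↔ AdmissibleBlock (wordOf s g) b := by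
  have innerPos_iff {j : ℕ} (hj : j ∈ Finset.range g.card) :
      InnerPos (e j) (b.image e) ↔ InnerPos j b := by
    have hmem : e j ∈ b.image e ↔ j ∈ b := by
      rw [← Finset.mem_coe, Finset.coe_image]
      exact he.injOn.mem_image_iff (by exact_mod_cast hb) hj
    rw [InnerPos, InnerPos, hmem, Finset.exists_mem_image]
    simp only [Finset.exists_mem_image]
    refine and_congr_right fun _ => exists_congr fun i => and_congr_right fun hi =>
      exists_congr fun k => and_congr_right fun hk => ?_
    rw [he.lt_iff_lt (hb hi) hj, he.lt_iff_lt hj (hb hk)]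
  have image_subset : b.image e ⊆ g := himage ▸ Finset.image_subset_image hb
  constructor
  · intro h j hjw hj
    have hjg : j < g.card := by simpa using lt_length_of_letterAt_eq_w hjw
    exact h (e j) (hletter j hjg ▸ hjw) ((innerPos_iff (by simpa using hjg)).2 hj)
  · intro h j hjw hj
    have hjg : j ∈ g := by
      obtain ⟨-, i, hi, k, hk, hijk⟩ := hj
      by_contra hjg
      exact hg j hjw ⟨hjg, i, image_subset hi, k, image_subset hk, hijk⟩
    rw [← himage] at hjg
    obtain ⟨i, hi, rfl⟩ := Finset.mem_image.1 hjg
    exact h i (hletter i (by simpa using hi) ▸ hjw) ((innerPos_iff hi).1 hj)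

lemma IsCumulants.partitionSum_eq_moment {M L : Word → ℂ} (hL : IsCumulants M L) (hM : M [] = 1)
    {s : Word} {g : Finset ℕ} (hg : AdmissibleBlock s g) :
    partitionSum (blockWeight L s) g = M (wordOf s g) := by
  obtain ⟨e, he, himage, hletter⟩ := exists_strictMonoOn_image_range s g
  rw [hL.moment_eq_partitionSum hM, length_wordOf]
  conv_lhs => rw [← himage]
  refine partitionSum_image he.injOn fun b hb => ?_
  have hword : wordOf s (b.image e) = wordOf (wordOf s g) b := by
    rw [wordOf_image s (he.mono (by exact_mod_cast hb)), wordOf]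
    refine List.map_congr_left fun i hi => (hletter i ?_).symm
    simpa using hb ((Finset.mem_sort _).1 hi)
  classical
  rw [blockWeight, blockWeight, hword]
  exact if_congr (admissibleBlock_image_iff hg he himage hletter hb) rfl rfl

end AdmissibleBlock

section InitialBlock

/-- A block is initial if it contains every letter `w` of `s` that precedes one of its elements. -/
def InitialBlock (s : Word) (b : Finset ℕ) : Prop :=
  ∀ j, letterAt s j = Letter.w → j ∉ b → ∀ k ∈ b, k < j

lemma admissibleBlock_and_mem_iff {s : Word} {x : ℕ} (hxw : letterAt s x = Letter.w)
    (hmin : ∀ j < x, letterAt s j ≠ Letter.w) {b : Finset ℕ} :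
    AdmissibleBlock s b ∧ x ∈ b ↔ InitialBlock s b ∧ Letter.w ∈ wordOf s b := by
  rw [mem_wordOf]
  constructor
  · rintro ⟨hadm, hxb⟩
    refine ⟨fun j hjw hjb k hk => ?_, x, hxb, hxw⟩
    by_contra! hjk
    have hxj : x ≤ j := not_lt.1 fun h => hmin j h hjw
    exact hadm j hjw ⟨hjb, x, hxb, k, hk, hxj.lt_of_ne (ne_of_mem_of_not_mem hxb hjb),
      hjk.lt_of_ne (ne_of_mem_of_not_mem hk hjb).symm⟩
  · rintro ⟨hinit, j, hjb, hjw⟩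
    refine ⟨?_, ?_⟩
    · rintro i hiw ⟨hib, -, -, k, hk, -, hik⟩
      exact hik.not_gt (hinit i hiw hib k hk)
    · by_contra hxb
      exact hmin j (hinit x hxw hxb j hjb) hjw

open scoped Classical in
/-- The sum over the initial blocks `b` of `s` which meet the first `p` positions in `A`, weighted
by `f` at the subword of `b` and by the partition sum of the remaining positions. -/
noncomputable def initialBlockSum (f L : Word → ℂ) (s : Word) (A : Finset ℕ) (p : ℕ) : ℂ :=
  ∑ b ∈ (Finset.range s.length).powerset with InitialBlock s b ∧ b ∩ Finset.range p = A,
    f (wordOf s b) * partitionSum (blockWeight L s) (Finset.range s.length \ b)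

lemma IsCumulants.deltaF_eq_initialBlockSum {M L : Word → ℂ} (hL : IsCumulants M L)
    (hM : M [] = 1) (s : Word) : deltaF M s = initialBlockSum (deltaF L) L s ∅ 0 := by
  classical
  by_cases hs : Letter.w ∈ s
  · have hex := exists_letterAt_eq_w.1 hs
    set x := Nat.find hex
    have hxw : letterAt s x = Letter.w := Nat.find_spec hex
    have hmin : ∀ j < x, letterAt s j ≠ Letter.w := fun j hj => Nat.find_min hex hj
    rw [deltaF, if_pos hs, hL.moment_eq_partitionSum hM, partitionSum_eq_sum_mem _
      (Finset.mem_range.2 (lt_length_of_letterAt_eq_w hxw)), initialBlockSum, Finset.sum_filter,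
      Finset.sum_filter]
    refine Finset.sum_congr rfl fun b _ => ?_
    have hiff := admissibleBlock_and_mem_iff hxw hmin (b := b)
    simp only [blockWeight, deltaF, Finset.range_zero, Finset.inter_empty, and_true,
      ite_mul, zero_mul, ← ite_and, and_comm (a := x ∈ b), hiff]
  · rw [deltaF, if_neg hs, initialBlockSum]
    refine (Finset.sum_eq_zero fun b _ => ?_).symm
    have hb : Letter.w ∉ wordOf s b := fun h =>
      let ⟨j, _, hjw⟩ := mem_wordOf.1 h
      hs (exists_letterAt_eq_w.2 ⟨j, hjw⟩)
    rw [deltaF, if_neg hb, zero_mul]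

lemma initialBlockSum_eq_add (f L : Word → ℂ) {s : Word} {A : Finset ℕ} {p : ℕ}
    (hA : A ⊆ Finset.range p) : initialBlockSum f L s A p =
      initialBlockSum f L s (insert p A) (p + 1) + initialBlockSum f L s A (p + 1) := by
  classical
  have hpA : p ∉ A := fun h => by simpa using hA h
  have hsplit (b : Finset ℕ) : b ∩ Finset.range p = A ↔
      b ∩ Finset.range (p + 1) = insert p A ∨ b ∩ Finset.range (p + 1) = A := by
    rw [Finset.range_add_one]
    by_cases hpb : p ∈ b
    · rw [Finset.inter_insert_of_mem hpb]
      have hne : insert p (b ∩ Finset.range p) ≠ A := fun h =>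
        hpA (h ▸ Finset.mem_insert_self p _)
      simp only [hne, or_false]
      refine ⟨fun h => h ▸ rfl, fun h => ?_⟩
      rw [← Finset.erase_insert (by simp : p ∉ b ∩ Finset.range p), h, Finset.erase_insert hpA]
    · rw [Finset.inter_insert_of_notMem hpb]
      have hne : b ∩ Finset.range p ≠ insert p A := fun h =>
        hpb (Finset.mem_inter.1 (h ▸ Finset.mem_insert_self p A)).1
      simp only [hne, false_or]
  rw [initialBlockSum, initialBlockSum, initialBlockSum, ← Finset.sum_union, ← Finset.filter_or]
  · simp only [hsplit, and_or_left]
  · refine Finset.disjoint_filter.2 fun b _ h h' => hpA ?_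
    rw [← h'.2, h.2]
    exact Finset.mem_insert_self p A

lemma initialBlockSum_of_forall_eq (f L : Word → ℂ) {s : Word} {A : Finset ℕ} {p : ℕ}
    (hAs : A ⊆ Finset.range s.length) (hA : A ⊆ Finset.range p) (hinit : InitialBlock s A)
    (huniq : ∀ b ⊆ Finset.range s.length, InitialBlock s b → b ∩ Finset.range p = A → b = A) :
    initialBlockSum f L s A p =
      f (wordOf s A) * partitionSum (blockWeight L s) (Finset.range s.length \ A) := by
  classical
  rw [initialBlockSum]
  refine Finset.sum_eq_single_of_mem A ?_ fun b hb hbA => ?_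
  · simp [hAs, hinit, hA]
  · simp only [Finset.mem_filter, Finset.mem_powerset] at hb
    exact absurd (huniq b hb.1 hb.2.1 hb.2.2) hbA

lemma InitialBlock.eq_of_inter_range_succ_eq {s : Word} {A b : Finset ℕ} {p : ℕ}
    (hb : InitialBlock s b) (hpw : letterAt s p = Letter.w) (hpA : p ∉ A)
    (hbA : b ∩ Finset.range (p + 1) = A) : b = A := by
  have hpb : p ∉ b := fun hpb => hpA (hbA ▸ by simp [hpb])
  rw [← hbA, eq_comm, Finset.inter_eq_left]
  exact fun k hk => Finset.mem_range.2 ((hb p hpw hpb k hk).trans p.lt_succ_self)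

end InitialBlock

section OpenBlock

/-- `A` is the part of an initial block among the first `p` positions of `s`, it contains all the
letters `w` there, and `ℓ` is the position following the last of them (`0` if there is none). -/
structure OpenBlock (s : Word) (A : Finset ℕ) (ℓ p : ℕ) : Prop where
  subset_range : A ⊆ Finset.range p
  mem_of_eq_w : ∀ j < p, letterAt s j = Letter.w → j ∈ A
  le : ℓ ≤ p
  ne_w : ∀ j < p, ℓ ≤ j → letterAt s j ≠ Letter.w
  eq_zero_or : ℓ = 0 ∨ ∃ j ∈ A, letterAt s j = Letter.w ∧ ℓ = j + 1

variable {s : Word} {A : Finset ℕ} {ℓ p : ℕ}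

lemma openBlock_empty (s : Word) : OpenBlock s ∅ 0 0 := by
  constructor <;> simp

lemma OpenBlock.initialBlock (h : OpenBlock s A ℓ p) : InitialBlock s A := by
  intro j hjw hjA k hk
  have hpj : p ≤ j := not_lt.1 fun hj => hjA (h.mem_of_eq_w j hj hjw)
  exact (Finset.mem_range.1 (h.subset_range hk)).trans_le hpj

lemma OpenBlock.insert_z (h : OpenBlock s A ℓ p) (hp : letterAt s p = Letter.z) :
    OpenBlock s (insert p A) ℓ (p + 1) where
  subset_range := by
    rw [Finset.range_add_one]
    exact Finset.insert_subset_insert p h.subset_range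
  mem_of_eq_w j hj hjw := by
    obtain hj | rfl := Nat.lt_succ_iff_lt_or_eq.1 hj
    · exact Finset.mem_insert_of_mem (h.mem_of_eq_w j hj hjw)
    · exact Finset.mem_insert_self j A
  le := h.le.trans p.le_succ
  ne_w j hj hℓj := by
    obtain hj | rfl := Nat.lt_succ_iff_lt_or_eq.1 hj
    · exact h.ne_w j hj hℓj
    · simp [hp]
  eq_zero_or := h.eq_zero_or.imp_right fun ⟨j, hj, hjw⟩ => ⟨j, Finset.mem_insert_of_mem hj, hjw⟩

lemma OpenBlock.skip_z (h : OpenBlock s A ℓ p) (hp : letterAt s p = Letter.z) :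
    OpenBlock s A ℓ (p + 1) where
  subset_range := h.subset_range.trans (Finset.range_mono p.le_succ)
  mem_of_eq_w j hj hjw := by
    obtain hj | rfl := Nat.lt_succ_iff_lt_or_eq.1 hj
    · exact h.mem_of_eq_w j hj hjw
    · simp [hp] at hjw
  le := h.le.trans p.le_succ
  ne_w := (h.insert_z hp).ne_w
  eq_zero_or := h.eq_zero_or

lemma OpenBlock.insert_w (h : OpenBlock s A ℓ p) (hp : letterAt s p = Letter.w) :
    OpenBlock s (insert p A) (p + 1) (p + 1) where
  subset_range := by
    rw [Finset.range_add_one]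
    exact Finset.insert_subset_insert p h.subset_range
  mem_of_eq_w j hj hjw := by
    obtain hj | rfl := Nat.lt_succ_iff_lt_or_eq.1 hj
    · exact Finset.mem_insert_of_mem (h.mem_of_eq_w j hj hjw)
    · exact Finset.mem_insert_self j A
  le := le_rfl
  ne_w j hj hj' := by omega
  eq_zero_or := Or.inr ⟨p, Finset.mem_insert_self p A, hp, rfl⟩

lemma OpenBlock.subset_range_or_subset_Ico (h : OpenBlock s A ℓ p) {b : Finset ℕ} {m : ℕ}
    (hb : AdmissibleBlock s b) (hbA : Disjoint b A) (hbm : b ⊆ Finset.range m) :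
    b ⊆ Finset.range ℓ ∨ b ⊆ Finset.Ico ℓ m := by
  obtain rfl | ⟨j, hjA, hjw, rfl⟩ := h.eq_zero_or
  · exact Or.inr (by rwa [← Finset.range_eq_Ico])
  have hjb : j ∉ b := Finset.disjoint_right.1 hbA hjA
  by_contra! hcon
  obtain ⟨k, hk, hjk⟩ := Finset.not_subset.1 hcon.1
  obtain ⟨i, hi, hij⟩ := Finset.not_subset.1 hcon.2
  have him := Finset.mem_range.1 (hbm hi)
  have hne := ne_of_mem_of_not_mem hi hjb
  simp only [Finset.mem_range, Finset.mem_Ico] at hjk hij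
  exact hb j hjw ⟨hjb, i, hi, k, hk, by omega, by omega⟩

lemma OpenBlock.admissibleBlock_Ico_sdiff (h : OpenBlock s A ℓ p) (m : ℕ) :
    AdmissibleBlock s (Finset.Ico ℓ m \ A) := by
  rintro j hjw ⟨hj, i, hi, k, hk, hij, hjk⟩
  simp only [Finset.mem_sdiff, Finset.mem_Ico] at hj hi hk
  have hℓj : ℓ ≤ j := hi.1.1.trans hij.le
  have hjA : j ∈ A := by
    by_contra hjA
    exact hj ⟨⟨hℓj, hjk.trans hk.1.2⟩, hjA⟩
  exact h.ne_w j (Finset.mem_range.1 (h.subset_range hjA)) hℓj hjw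

lemma OpenBlock.partitionSum_range_sdiff {M L : Word → ℂ} (hL : IsCumulants M L) (hM : M [] = 1)
    (h : OpenBlock s A ℓ p) {m : ℕ} (hpm : p ≤ m) :
    partitionSum (blockWeight L s) (Finset.range m \ A) =
      partitionSum (blockWeight L s) (Finset.range ℓ \ A) *
        M (wordOf s (Finset.Ico ℓ p \ A) ++ wordOf s (Finset.Ico p m)) := by
  have hrange : Finset.range m \ A = Finset.range ℓ \ A ∪ Finset.Ico ℓ m \ A := by
    rw [← Finset.union_sdiff_distrib, Finset.range_eq_Ico, Finset.range_eq_Ico,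
      Finset.Ico_union_Ico_eq_Ico ℓ.zero_le (h.le.trans hpm)]
  have hIco : Finset.Ico ℓ m \ A = Finset.Ico ℓ p \ A ∪ Finset.Ico p m := by
    have hA : Disjoint (Finset.Ico p m) A := Finset.disjoint_right.2 fun i hi him =>
      (Finset.mem_Ico.1 him).1.not_gt (Finset.mem_range.1 (h.subset_range hi))
    rw [← Finset.Ico_union_Ico_eq_Ico h.le hpm, Finset.union_sdiff_distrib,
      Finset.sdiff_eq_self_of_disjoint hA]
  have hdisj : Disjoint (Finset.range ℓ \ A) (Finset.Ico ℓ m \ A) := by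
    rw [Finset.range_eq_Ico]
    exact (Finset.Ico_disjoint_Ico_consecutive 0 ℓ m).mono Finset.sdiff_subset Finset.sdiff_subset
  have hsplit : ∀ b ⊆ Finset.range m \ A, blockWeight L s b ≠ 0 →
      b ⊆ Finset.range ℓ \ A ∨ b ⊆ Finset.Ico ℓ m \ A := by
    intro b hb hb0
    have hadm : AdmissibleBlock s b := by
      by_contra hadm
      exact hb0 (if_neg hadm)
    obtain ⟨hbm, hbA⟩ := Finset.subset_sdiff.1 hb
    simp only [Finset.subset_sdiff, hbA, and_true]
    exact h.subset_range_or_subset_Ico hadm hbA hbm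
  rw [hrange] at hsplit ⊢
  rw [partitionSum_union hdisj hsplit, hL.partitionSum_eq_moment hM (h.admissibleBlock_Ico_sdiff m),
    hIco, wordOf_union]
  intro i hi j hj
  simp only [Finset.mem_sdiff, Finset.mem_Ico] at hi hj
  omega

end OpenBlock

section ExtensionSum

/-- The sum over the ways of extending an open block with word `q` by letters of `t`, where `v` is
the run of letters `z` left out since the last letter `w` of the block. A letter `w` joining the
block cuts off the run `v`; the first letter `w` left out ends the block. -/
noncomputable def extensionSum (f M : Word → ℂ) : Word → Word → Word → ℂ
  | q, v, [] => f q * M v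
  | q, v, Letter.z :: t =>
    extensionSum f M (q ++ [Letter.z]) v t + extensionSum f M q (v ++ [Letter.z]) t
  | q, v, Letter.w :: t =>
    M v * extensionSum f M (q ++ [Letter.w]) [] t + f q * M (v ++ Letter.w :: t)

variable {M L : Word → ℂ} {s : Word} {A : Finset ℕ} {ℓ p : ℕ}

lemma OpenBlock.initialBlockSum_eq_single (f : Word → ℂ) (h : OpenBlock s A ℓ p)
    (hL : IsCumulants M L) (hM : M [] = 1) (hps : p ≤ s.length) {m : ℕ} (hpm : p ≤ m)
    (huniq : ∀ b ⊆ Finset.range s.length, InitialBlock s b → b ∩ Finset.range m = A → b = A) :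
    initialBlockSum f L s A m = partitionSum (blockWeight L s) (Finset.range ℓ \ A) *
      (f (wordOf s A) * M (wordOf s (Finset.Ico ℓ p \ A) ++ s.drop p)) := by
  rw [initialBlockSum_of_forall_eq f L (h.subset_range.trans (Finset.range_mono hps))
    (h.subset_range.trans (Finset.range_mono hpm)) h.initialBlock huniq,
    h.partitionSum_range_sdiff hL hM hps, wordOf_Ico_length, mul_left_comm]

lemma OpenBlock.initialBlockSum_eq_extensionSum (f : Word → ℂ) (hL : IsCumulants M L)
    (hM : M [] = 1) (h : OpenBlock s A ℓ p) (hps : p ≤ s.length) :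
    initialBlockSum f L s A p = partitionSum (blockWeight L s) (Finset.range ℓ \ A) *
      extensionSum f M (wordOf s A) (wordOf s (Finset.Ico ℓ p \ A)) (s.drop p) := by
  induction hp : s.length - p generalizing A ℓ p with
  | zero =>
    obtain rfl : p = s.length := by omega
    rw [h.initialBlockSum_eq_single f hL hM le_rfl le_rfl fun b hb _ hbA =>
      (Finset.inter_eq_left.2 hb).symm.trans hbA, List.drop_length, List.append_nil, extensionSum]
  | succ n ih =>
    have hlt : p < s.length := by omega
    have hdrop : s.drop p = letterAt s p :: s.drop (p + 1) := by
      simp [letterAt, hlt]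
    have hpA : p ∉ A := fun hpA => by simpa using h.subset_range hpA
    have hwordOf : wordOf s (insert p A) = wordOf s A ++ [letterAt s p] :=
      wordOf_insert s fun i hi => Finset.mem_range.1 (h.subset_range hi)
    rw [initialBlockSum_eq_add f L h.subset_range]
    cases hletter : letterAt s p with
    | z =>
      have hchosen : Finset.Ico ℓ (p + 1) \ insert p A = Finset.Ico ℓ p \ A := by
        rw [← Finset.insert_Ico_right_eq_Ico_add_one h.le, Finset.insert_sdiff_insert,
          Finset.sdiff_insert_of_notMem (by simp)]
      have hskipped : Finset.Ico ℓ (p + 1) \ A = insert p (Finset.Ico ℓ p \ A) := by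
        rw [← Finset.insert_Ico_right_eq_Ico_add_one h.le, Finset.insert_sdiff_of_notMem _ hpA]
      have hrange : Finset.range ℓ \ insert p A = Finset.range ℓ \ A := by
        rw [Finset.sdiff_insert_of_notMem (by simp [h.le])]
      rw [ih (h.insert_z hletter) hlt (by omega), ih (h.skip_z hletter) hlt (by omega), hchosen,
        hskipped, hrange, hdrop, hwordOf, wordOf_insert s (by simp +contextual), hletter,
        extensionSum, mul_add]
    | w =>
      have hrange : Finset.range (p + 1) \ insert p A = Finset.range p \ A := by
        rw [Finset.range_add_one, Finset.insert_sdiff_insert,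
          Finset.sdiff_insert_of_notMem (by simp)]
      rw [ih (h.insert_w hletter) hlt (by omega), hrange, h.partitionSum_range_sdiff hL hM le_rfl,
        h.initialBlockSum_eq_single f hL hM hps p.le_succ fun b _ hb hbA =>
          hb.eq_of_inter_range_succ_eq hletter hpA hbA, hdrop, hwordOf, hletter, extensionSum]
      simp only [Finset.Ico_self, Finset.empty_sdiff, wordOf_empty, List.append_nil]
      ring

lemma IsCumulants.deltaF_eq_extensionSum (hL : IsCumulants M L) (hM : M [] = 1) (s : Word) :
    deltaF M s = extensionSum (deltaF L) M [] [] s := by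
  rw [hL.deltaF_eq_initialBlockSum hM,
    (openBlock_empty s).initialBlockSum_eq_extensionSum _ hL hM s.length.zero_le]
  simp

end ExtensionSum

open Finset.HasAntidiagonal (antidiagonal mem_antidiagonal)

section Run

/-- The run `z^a`. -/
abbrev zRun (a : ℕ) : Word := List.replicate a Letter.z

lemma zRun_add (a b : ℕ) : zRun (a + b) = zRun a ++ zRun b :=
  List.replicate_add a b Letter.z

lemma zRun_succ (a : ℕ) : zRun (a + 1) = Letter.z :: zRun a :=
  rfl

lemma run_induction {P : Word → Prop} (run : ∀ a, P (zRun a))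
    (append_w : ∀ a r, P r → P (zRun a ++ Letter.w :: r)) (s : Word) : P s := by
  suffices h : ∀ a, P (zRun a ++ s) from h 0
  induction s with
  | nil => simpa using run
  | cons x r ih =>
    cases x with
    | z =>
      intro a
      simpa [zRun_add] using ih (a + 1)
    | w => exact fun a => append_w a r (ih 0)

lemma nFact_zRun (a : ℕ) : nFact (zRun a) = a.factorial := by
  rw [nFact, List.splitOn_eq_singleton (by simp)]
  simp

lemma nFact_nil : nFact [] = 1 :=
  nFact_zRun 0

lemma nFact_append_w (u v : Word) : nFact (u ++ Letter.w :: v) = nFact u * nFact v := by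
  rw [nFact, List.splitOn_append_cons_self, List.map_append, List.prod_append]
  rfl

lemma nFact_append_singleton_w_append (u v : Word) :
    nFact (u ++ [Letter.w] ++ v) = nFact (u ++ [Letter.w]) * nFact v := by
  rw [List.append_assoc, List.singleton_append, nFact_append_w, nFact_append_w, nFact_nil, mul_one]

lemma nFact_ne_zero (s : Word) : nFact s ≠ 0 := by
  simp [nFact, List.prod_eq_zero_iff, Nat.factorial_ne_zero]

end Run

section RestrZ

lemma deltaF_genFun (f : Word → ℂ) (s : Word) : deltaF (genFun f) s = genFun (deltaF f) s := by
  simp only [deltaF, genFun, ite_div, zero_div]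

lemma restrZ_add_deltaF (f : Word → ℂ) (s : Word) : restrZ f s + deltaF f s = f s := by
  rw [restrZ, deltaF]
  split_ifs <;> simp

lemma restrZ_zRun (f : Word → ℂ) (a : ℕ) : restrZ f (zRun a) = f (zRun a) :=
  if_neg (by simp)

lemma restrZ_append_w (f : Word → ℂ) (u v : Word) : restrZ f (u ++ Letter.w :: v) = 0 :=
  if_pos (by simp)

end RestrZ

section ExtensionGenFun

variable {f M : Word → ℂ}

lemma extensionSum_zRun_append (a : ℕ) (q v t : Word) :
    extensionSum f M q v (zRun a ++ t) = ∑ ij ∈ antidiagonal a,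
      (a.choose ij.1 : ℂ) * extensionSum f M (q ++ zRun ij.1) (v ++ zRun ij.2) t := by
  induction a generalizing q v with
  | zero => simp
  | succ a ih =>
    have hsymm (F : ℕ × ℕ → ℂ) : ∑ ij ∈ antidiagonal a, (a.choose ij.1 : ℂ) * F ij =
        ∑ ij ∈ antidiagonal a, (a.choose ij.2 : ℂ) * F ij :=
      Finset.sum_congr rfl fun ij hij => by
        rw [Nat.choose_symm_of_eq_add (mem_antidiagonal.1 hij).symm]
    rw [zRun_succ, List.cons_append, extensionSum, ih, ih, hsymm, add_comm,
      Finset.sum_antidiagonal_choose_succ_mul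
        fun i j => extensionSum f M (q ++ zRun i) (v ++ zRun j) t]
    simp only [zRun_succ, List.append_assoc, List.singleton_append]

/-- The generating function of `extensionSum f M q []`, with the factorials of `q` divided out as
well. -/
noncomputable def extensionGenFun (f M : Word → ℂ) (q t : Word) : ℂ :=
  extensionSum f M q [] t / (nFact q * nFact t)

variable {q : Word}

lemma extensionGenFun_zRun (hq : ∀ u, nFact (q ++ u) = nFact q * nFact u) (a : ℕ) :
    extensionGenFun f M q (zRun a) =
      ∑ ij ∈ antidiagonal a, genFun f (q ++ zRun ij.1) * genFun M (zRun ij.2) := by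
  have hsum := extensionSum_zRun_append (f := f) (M := M) a q [] []
  rw [List.append_nil] at hsum
  rw [extensionGenFun, hsum, Finset.sum_div]
  refine Finset.sum_congr rfl fun ij hij => ?_
  obtain rfl := mem_antidiagonal.1 hij
  simp only [genFun, extensionSum, hq, nFact_zRun, Nat.cast_add_choose, List.nil_append]
  have hq0 : (nFact q : ℂ) ≠ 0 := Nat.cast_ne_zero.2 (nFact_ne_zero q)
  have hfact (n : ℕ) : (n.factorial : ℂ) ≠ 0 := Nat.cast_ne_zero.2 n.factorial_ne_zero
  push_cast
  field_simp [hfact]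

lemma extensionGenFun_append_w (hq : ∀ u, nFact (q ++ u) = nFact q * nFact u) (a : ℕ) (r : Word) :
    extensionGenFun f M q (zRun a ++ Letter.w :: r) = ∑ ij ∈ antidiagonal a,
      (genFun M (zRun ij.2) * extensionGenFun f M (q ++ zRun ij.1 ++ [Letter.w]) r +
        genFun f (q ++ zRun ij.1) * genFun M (zRun ij.2 ++ Letter.w :: r)) := by
  rw [extensionGenFun, extensionSum_zRun_append, Finset.sum_div]
  refine Finset.sum_congr rfl fun ij hij => ?_
  obtain rfl := mem_antidiagonal.1 hij
  simp only [genFun, extensionGenFun, extensionSum, hq, nFact_zRun, nFact_append_w, nFact_nil,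
    Nat.cast_add_choose, List.nil_append]
  have hq0 : (nFact q : ℂ) ≠ 0 := Nat.cast_ne_zero.2 (nFact_ne_zero q)
  have hr0 : (nFact r : ℂ) ≠ 0 := Nat.cast_ne_zero.2 (nFact_ne_zero r)
  have hfact (n : ℕ) : (n.factorial : ℂ) ≠ 0 := Nat.cast_ne_zero.2 n.factorial_ne_zero
  push_cast
  field_simp [hfact]

lemma IsCumulants.deltaF_genFun_eq_extensionGenFun {L : Word → ℂ} (hL : IsCumulants M L)
    (hM : M [] = 1) : deltaF (genFun M) = extensionGenFun (deltaF L) M [] := by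
  funext s
  rw [deltaF_genFun, genFun, hL.deltaF_eq_extensionSum hM, extensionGenFun, nFact_nil,
    Nat.cast_one, one_mul]

end ExtensionGenFun

section Convolution

lemma conv_nil (f g : Word → ℂ) : conv f g [] = f [] * g [] := by
  simp [conv]

lemma conv_cons (f g : Word → ℂ) (x : Letter) (s : Word) :
    conv f g (x :: s) = f [] * g (x :: s) + conv (fun t => f (x :: t)) g s := by
  rw [conv, List.length_cons, Finset.sum_range_succ', add_comm]
  rfl

lemma conv_smul_add (c : ℂ) (f₁ f₂ g : Word → ℂ) (s : Word) :
    conv (fun t => c * f₁ t + f₂ t) g s = c * conv f₁ g s + conv f₂ g s := by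
  simp only [conv, Finset.mul_sum, ← Finset.sum_add_distrib]
  exact Finset.sum_congr rfl fun i _ => by ring

lemma conv_assoc (f g h : Word → ℂ) : conv (conv f g) h = conv f (conv g h) := by
  funext s
  induction s generalizing f with
  | nil => simp only [conv_nil, mul_assoc]
  | cons x s ih =>
    simp only [conv_cons, conv_nil, conv_smul_add, ih]
    ring

lemma conv_one {f e : Word → ℂ} (he : ∀ s, e s = if s = [] then 1 else 0) : conv f e = f := by
  funext s
  induction s generalizing f with
  | nil => simp [conv_nil, he]
  | cons x s ih => rw [conv_cons, he, ih, if_neg (List.cons_ne_nil x s), mul_zero, zero_add]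

open PowerSeries

/-- The power series whose `a`-th coefficient is the value of `h` at the run `z^a`. -/
noncomputable def runSeries (h : Word → ℂ) : ℂ⟦X⟧ :=
  PowerSeries.mk fun a => h (zRun a)

@[simp]
lemma coeff_runSeries (h : Word → ℂ) (a : ℕ) : coeff a (runSeries h) = h (zRun a) :=
  coeff_mk a _

lemma runSeries_restrZ (h : Word → ℂ) : runSeries (restrZ h) = runSeries h := by
  ext a
  simp only [coeff_runSeries, restrZ_zRun]

lemma conv_zRun (f g : Word → ℂ) (a : ℕ) :
    conv f g (zRun a) = coeff a (runSeries f * runSeries g) := by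
  rw [coeff_mul]
  simp only [coeff_runSeries]
  induction a generalizing f with
  | zero => simp [conv_nil]
  | succ a ih =>
    rw [Finset.Nat.sum_antidiagonal_succ, zRun_succ, conv_cons, ih]
    simp [zRun_succ]

lemma conv_append_w (f g : Word → ℂ) (a : ℕ) (r : Word) :
    conv f g (zRun a ++ Letter.w :: r) =
      coeff a (runSeries f * runSeries fun u => g (u ++ Letter.w :: r)) +
        conv (fun t => f (zRun a ++ Letter.w :: t)) g r := by
  rw [coeff_mul]
  simp only [coeff_runSeries]
  induction a generalizing f with
  | zero => simp [conv_cons]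
  | succ a ih =>
    rw [Finset.Nat.sum_antidiagonal_succ, zRun_succ, List.cons_append, conv_cons, ih]
    simp [zRun_succ, add_assoc]

end Convolution

section Star

open PowerSeries

/-- `starAux g s a F` is the value at `z^a s` of the composition of `F` with the function on runs
having the coefficients of `g` as its values, in prefix-accumulating form. -/
noncomputable def starAux (g : ℂ⟦X⟧) : Word → ℕ → (Word → ℂ) →ₗ[ℂ] ℂ
  | [], a => LinearMap.proj (zRun a)
  | Letter.z :: s, a => starAux g s (a + 1)
  | Letter.w :: s, a => ∑ ij ∈ antidiagonal a,
      coeff ij.2 g • (starAux g s 0).comp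
        (LinearMap.funLeft ℂ ℂ fun t => zRun ij.1 ++ Letter.w :: t)

/-- The value `F_{⋆g}(s)` as a linear functional of `F`, where `g` is encoded by the power series
of its values on runs. -/
noncomputable def starAt (g : ℂ⟦X⟧) (s : Word) : (Word → ℂ) →ₗ[ℂ] ℂ :=
  starAux g s 0

lemma starAux_zRun_append (g : ℂ⟦X⟧) (b : ℕ) (s : Word) (a : ℕ) :
    starAux g (zRun b ++ s) a = starAux g s (a + b) := by
  induction b generalizing a with
  | zero => rfl
  | succ b ih => rw [zRun_succ, List.cons_append, starAux, ih, add_right_comm, add_assoc]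

lemma starAt_zRun (g : ℂ⟦X⟧) (a : ℕ) (F : Word → ℂ) : starAt g (zRun a) F = F (zRun a) := by
  rw [starAt, ← List.append_nil (zRun a), starAux_zRun_append, List.append_nil, starAux, zero_add,
    LinearMap.proj_apply]

lemma starAt_append_w (g : ℂ⟦X⟧) (a : ℕ) (r : Word) (F : Word → ℂ) :
    starAt g (zRun a ++ Letter.w :: r) F =
      coeff a ((runSeries fun u => starAt g r fun t => F (u ++ Letter.w :: t)) * g) := by
  rw [starAt, starAux_zRun_append, zero_add, starAux, coeff_mul, LinearMap.sum_apply]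
  refine Finset.sum_congr rfl fun ij _ => ?_
  rw [coeff_runSeries, mul_comm]
  rfl

lemma starAt_restrZ (g : ℂ⟦X⟧) (F : Word → ℂ) (s : Word) :
    starAt g s (restrZ F) = restrZ F s := by
  induction s using run_induction with
  | run a => exact starAt_zRun g a _
  | append_w a r _ =>
    have hzero (u : Word) : (fun t => restrZ F (u ++ Letter.w :: t)) = 0 :=
      funext fun t => restrZ_append_w F u t
    rw [starAt_append_w, restrZ_append_w]
    simp only [hzero, map_zero]
    simp [coeff_mul]

lemma exists_eq_replicate_w_append (r : Word) :
    ∃ k rest, r = List.replicate k Letter.w ++ rest ∧ rest.head? ≠ some Letter.w := by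
  induction r with
  | nil => exact ⟨0, [], rfl, by simp⟩
  | cons x r ih =>
    cases x with
    | z => exact ⟨0, Letter.z :: r, rfl, by simp⟩
    | w =>
      obtain ⟨k, rest, rfl, hrest⟩ := ih
      exact ⟨k + 1, rest, rfl, hrest⟩

lemma IsStarAux.append_w {f g : Word → ℂ} {G : Word → Word → ℂ} (hG : IsStarAux f g G)
    (hg : g [] = 1) (pre : Word) (a : ℕ) (r : Word) :
    G pre (zRun a ++ Letter.w :: r) =
      ∑ ij ∈ antidiagonal a, g (zRun ij.2) * G (pre ++ zRun ij.1 ++ [Letter.w]) r := by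
  obtain ⟨k, rest, rfl, hrest⟩ := exists_eq_replicate_w_append r
  have absorb (u : Word) : G u (List.replicate k Letter.w ++ rest) =
      G (u ++ List.replicate k Letter.w) rest := by
    obtain rfl | hk := k.eq_zero_or_pos
    · simp
    · simpa [hg] using hG.2 u 0 k rest hk hrest
  have hsum := hG.2 pre a (k + 1) rest k.succ_pos hrest
  rw [Finset.Nat.sum_antidiagonal_eq_sum_range_succ_mk]
  simpa [absorb, List.replicate_succ] using hsum

lemma IsStarAux.eq_starAt {f g : Word → ℂ} {G : Word → Word → ℂ} (hG : IsStarAux f g G)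
    (hg : g [] = 1) (pre s : Word) : G pre s = starAt (runSeries g) s fun t => f (pre ++ t) := by
  induction s using run_induction generalizing pre with
  | run a => rw [starAt_zRun, hG.1 _ _ (by simp)]
  | append_w a r ih =>
    rw [hG.append_w hg, starAt_append_w, coeff_mul]
    refine Finset.sum_congr rfl fun ij _ => ?_
    simp [ih, mul_comm]

lemma runSeries_starAt_append_w (g : ℂ⟦X⟧) (r : Word) (F : Word → ℂ) :
    (runSeries fun u => starAt g (u ++ Letter.w :: r) F) =
      (runSeries fun u => starAt g r fun t => F (u ++ Letter.w :: t)) * g := by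
  ext a
  rw [coeff_runSeries, starAt_append_w]

lemma runSeries_starAt_extensionGenFun {f M : Word → ℂ} {q : Word}
    (hq : ∀ u, nFact (q ++ u) = nFact q * nFact u) (g : ℂ⟦X⟧) (r : Word) :
    (runSeries fun u => starAt g r fun t => extensionGenFun f M q (u ++ Letter.w :: t)) =
      (runSeries fun u => starAt g r (extensionGenFun f M (q ++ u ++ [Letter.w]))) *
          runSeries (genFun M) +
        (runSeries fun u => genFun f (q ++ u)) *
          runSeries fun u => starAt g r fun t => genFun M (u ++ Letter.w :: t) := by
  ext a
  have hrun : (fun t => extensionGenFun f M q (zRun a ++ Letter.w :: t)) =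
      ∑ ij ∈ antidiagonal a,
        (genFun M (zRun ij.2) • extensionGenFun f M (q ++ zRun ij.1 ++ [Letter.w]) +
          genFun f (q ++ zRun ij.1) • fun t => genFun M (zRun ij.2 ++ Letter.w :: t)) := by
    funext t
    simp [extensionGenFun_append_w hq]
  rw [coeff_runSeries, hrun, map_sum, map_add, coeff_mul, coeff_mul, ← Finset.sum_add_distrib]
  refine Finset.sum_congr rfl fun ij _ => ?_
  simp [mul_comm]

lemma starAt_extensionGenFun {f M : Word → ℂ} {g : ℂ⟦X⟧} (hg : runSeries (genFun M) * g = 1)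
    {q : Word} (hq : ∀ u, nFact (q ++ u) = nFact q * nFact u) (s : Word) :
    starAt g s (extensionGenFun f M q) =
      conv (fun u => genFun f (q ++ u)) (fun t => starAt g t (genFun M)) s := by
  induction s using run_induction generalizing q with
  | run a =>
    rw [starAt_zRun, extensionGenFun_zRun hq, conv_zRun, coeff_mul]
    simp only [coeff_runSeries, starAt_zRun]
  | append_w a r ih =>
    set extended := runSeries fun u => starAt g r (extensionGenFun f M (q ++ u ++ [Letter.w]))
    set closed := runSeries fun u => genFun f (q ++ u) with hclosed
    set rest := runSeries fun u => starAt g r fun t => genFun M (u ++ Letter.w :: t)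
    calc starAt g (zRun a ++ Letter.w :: r) (extensionGenFun f M q)
        = coeff a ((extended * runSeries (genFun M) + closed * rest) * g) := by
          rw [starAt_append_w, runSeries_starAt_extensionGenFun hq]
      _ = coeff a (closed * (rest * g)) + coeff a extended := by
          rw [add_mul, mul_assoc, hg, mul_one, mul_assoc, map_add, add_comm]
      _ = coeff a (closed * runSeries fun u => starAt g (u ++ Letter.w :: r) (genFun M)) +
          conv (fun t => genFun f (q ++ zRun a ++ [Letter.w] ++ t))
            (fun t => starAt g t (genFun M)) r := by
          rw [runSeries_starAt_append_w, coeff_runSeries, ih (nFact_append_singleton_w_append _)]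
      _ = conv (fun u => genFun f (q ++ u)) (fun t => starAt g t (genFun M))
          (zRun a ++ Letter.w :: r) := by
          rw [conv_append_w]
          simp only [List.append_assoc, List.singleton_append, hclosed]

lemma IsCumulants.starAt_sub_restrZ {M L : Word → ℂ} (hL : IsCumulants M L) (hM : M [] = 1)
    {g : ℂ⟦X⟧} (hg : runSeries (genFun M) * g = 1) (s : Word) :
    starAt g s (genFun M) - restrZ (genFun M) s =
      conv (genFun (deltaF L)) (fun t => starAt g t (genFun M)) s := by
  have hsplit : genFun M = restrZ (genFun M) + deltaF (genFun M) :=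
    funext fun t => (restrZ_add_deltaF (genFun M) t).symm
  rw [sub_eq_iff_eq_add']
  conv_lhs => rw [hsplit, map_add, starAt_restrZ, hL.deltaF_genFun_eq_extensionGenFun hM]
  rw [starAt_extensionGenFun hg (by simp [nFact_nil])]
  rfl

end Star

/-- `L{z,w} = L{z,0} + (M⋆{z,w} − M{z,0}) ⋆ M⋆⁻¹{z,w}` in `A(S)`,
where `M⋆{z,w} = (M{z,w})_{⋆ M⁻¹{z,0}}`. -/
theorem cumulant_generating_function_formula (M L : Word → ℂ)
    (hM1 : M [] = 1) (hL : IsCumulants M L)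
    (Lgen : Word → ℂ) (hLgen : Lgen [] = 0)
    (hLgen' : ∀ s : Word, s ≠ [] → Lgen s = L s / (nFact s : ℂ))
    (Minv0 : Word → ℂ) (hMinv0supp : ∀ s : Word, Letter.w ∈ s → Minv0 s = 0)
    (hMinv0₁ : ∀ s : Word, conv (restrZ (genFun M)) Minv0 s = if s = [] then 1 else 0)
    (hMinv0₂ : ∀ s : Word, conv Minv0 (restrZ (genFun M)) s = if s = [] then 1 else 0)
    (G : Word → Word → ℂ) (hG : IsStarAux (genFun M) Minv0 G)
    (Mstarinv : Word → ℂ)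
    (hMsi₁ : ∀ s : Word, conv (fun t => G [] t) Mstarinv s = if s = [] then 1 else 0)
    (hMsi₂ : ∀ s : Word, conv Mstarinv (fun t => G [] t) s = if s = [] then 1 else 0) :
    ∀ s : Word,
      Lgen s =
        restrZ Lgen s +
          conv (fun t => G [] t - restrZ (genFun M) t) Mstarinv s := by
  intro s
  have hinv : runSeries (genFun M) * runSeries Minv0 = 1 := by
    ext a
    rw [← runSeries_restrZ, ← conv_zRun, hMinv0₁, PowerSeries.coeff_one]
    simp
  have hMinv0 : Minv0 [] = 1 := by
    simpa [conv_nil, restrZ, genFun, hM1, nFact_nil] using hMinv0₁ []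
  have hstar : ∀ t, G [] t = starAt (runSeries Minv0) t (genFun M) := hG.eq_starAt hMinv0 []
  have hdelta : deltaF Lgen = genFun (deltaF L) := by
    funext t
    obtain rfl | ht := eq_or_ne t []
    · simp [deltaF, genFun]
    · simp [deltaF, genFun, hLgen' t ht, ite_div]
  have hmain : (fun t => G [] t - restrZ (genFun M) t) = conv (deltaF Lgen) (fun t => G [] t) := by
    funext t
    simp only [hstar, hdelta, hL.starAt_sub_restrZ hM1 hinv t]
  rw [hmain, conv_assoc, conv_one hMsi₁, restrZ_add_deltaF]
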